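/- For every integer r ≥ 1 there exist a constant ε₀ > 0 and a positive real c_r depending only on r such that the following holds: for all real 0 < ε ≤ ε₀ and all integers k ≥ 2^r · r! · ε^{-1} · (log(1/(5ε)))^r, there exists an integer N ≥ c_r · k^r / (ε^{r-1} · (log(1/ε))^{\binom{r+1}{2}-1}) such that {1,…,N} admits a coloring with r colors containing no monochromatic AP_k(ε). -/

import Mathlib

/-- `x 0, …, x (k-1)` is an `ε`-approximate arithmetic progression of length `k`. -/
def IsAPeps (ε : ℝ) (k : ℕ) (x : ℕ → ℤ) : Prop :=
  ∃ a d : ℝ, 0 < d ∧ ∀ i < k, |(x i : ℝ) - (a + (i : ℝ) * d)| < ε * d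


lemma count_aux {ι W : Type*} [Fintype ι] [DecidableEq ι] [Fintype W] [DecidableEq W] [Nonempty W]
    (s t : ℕ → ι) (p q : ℕ → W) (J : ℕ) (hst : ∀ j < J, s j ≠ t j)
    (hd : ∀ j < J, ∀ i < j, s i ≠ s j ∧ s i ≠ t j ∧ t i ≠ s j ∧ t i ≠ t j) :
    ((Finset.univ.filter (fun ω : ι → W => ∀ j < J, ¬ (ω (s j) = p j ∧ ω (t j) = q j))).card : ℝ)
      * ((Fintype.card W : ℝ) ^ 2) ^ J ≤ (Fintype.card (ι → W) : ℝ) * ((Fintype.card W : ℝ) ^ 2 - 1) ^ J := by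
  induction J with
  | zero => simp
  | succ J ih =>
    have ih' := ih (fun j hj => hst j (by omega)) (fun j hj i hi => hd j (by omega) i hi)
    set A := Finset.univ.filter (fun ω : ι → W => ∀ j < J, ¬ (ω (s j) = p j ∧ ω (t j) = q j)) with hA
    set B := Finset.univ.filter (fun ω : ι → W => ∀ j < J + 1, ¬ (ω (s j) = p j ∧ ω (t j) = q j)) with hB
    have hBA : B ⊆ A := by
      intro ω hω
      simp only [hA, hB, Finset.mem_filter, Finset.mem_univ, true_and] at hω ⊢
      exact fun j hj => hω j (by omega)
    have h1 : A.card ≤ ((A \ B) ×ˢ (Finset.univ : Finset (W × W))).card := by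
      apply Finset.card_le_card_of_injOn
        (fun ω => (Function.update (Function.update ω (s J) (p J)) (t J) (q J), (ω (s J), ω (t J))))
      · intro ω hω
        have hne := hst J (by omega)
        simp only [hA, Finset.coe_filter, Set.mem_ofPred_eq, Finset.mem_univ, true_and] at hω
        simp only [hA, hB, Finset.coe_product, Set.mem_prod, Finset.mem_coe, Finset.mem_sdiff, Finset.mem_filter, Finset.mem_univ, true_and, and_true]
        refine ⟨fun j hj => ?_, fun h => ?_⟩
        · obtain ⟨h1, h2, h3, h4⟩ := hd J (by omega) j hj
          simpa [Function.update_of_ne, h1, h2, h3, h4] using hω j hj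
        · exact h J (by omega) (by simp [Function.update_of_ne, hne])
      · intro ω _ ω' _ h
        simp only [Prod.mk.injEq] at h
        obtain ⟨h1, h2, h3⟩ := h
        funext x
        by_cases hx : x = t J
        · rw [hx, h3]
        by_cases hx' : x = s J
        · rw [hx', h2]
        have := congrFun h1 x
        simpa [Function.update_of_ne, hx, hx'] using this
    rw [Finset.card_product, Finset.card_sdiff_of_subset hBA, Finset.card_univ, Fintype.card_prod] at h1
    have hle := Finset.card_le_card hBA
    have h2 : (A.card : ℝ) ≤ ((A.card : ℝ) - B.card) * ((Fintype.card W : ℝ) ^ 2) := by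
      have : (A.card : ℝ) ≤ ((A.card - B.card : ℕ) : ℝ) * ((Fintype.card W : ℝ) * Fintype.card W) := by exact_mod_cast h1
      rw [Nat.cast_sub hle] at this
      rw [sq]; exact this
    have hnn : (0:ℝ) ≤ (Fintype.card W : ℝ) ^ 2 - 1 := by
      have : 0 < Fintype.card W := Fintype.card_pos
      have : (1:ℝ) ≤ Fintype.card W := by exact_mod_cast this
      nlinarith
    set w : ℝ := (Fintype.card W : ℝ) ^ 2
    have hw : 0 ≤ w := by positivity
    calc (B.card : ℝ) * w ^ (J+1) = (B.card * w) * w ^ J := by ring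
        _ ≤ (A.card * (w - 1)) * w ^ J := by
            apply mul_le_mul_of_nonneg_right _ (by positivity); nlinarith
        _ = (A.card * w ^ J) * (w - 1) := by ring
        _ ≤ _ := mul_le_mul_of_nonneg_right ih' hnn
        _ = _ := by ring

def missN (M : ℕ) (g : ℕ → ℕ) (b : ℕ) : ℕ := ((b % M + g (b / M)) % M) / 5

lemma exists_shift (M p v : ℕ) (hv : v < M) : ∃ g < M, (p + g) % M = v := by
  refine ⟨(v + (M - p % M)) % M, Nat.mod_lt _ (by omega), ?_⟩
  rw [Nat.add_mod, Nat.mod_mod, ← Nat.add_mod]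
  have h1 := Nat.mod_lt p (show M > 0 by omega)
  have h2 := Nat.div_add_mod p M
  have : p + (v + (M - p % M)) = v + M * (p / M + 1) := by rw [mul_add]; omega
  rw [this, Nat.add_mul_mod_self_left, Nat.mod_eq_of_lt hv]

lemma miss_cover (R : ℕ) (g : ℕ → ℕ) (n c : ℕ) (hc : c < R) :
    ∃ b, n * (5 * R) ≤ b ∧ b < (n + 1) * (5 * R) ∧ missN (5 * R) g b = c := by
  obtain ⟨p, hp, h⟩ := exists_shift (5 * R) (g n) (5 * c) (by omega)
  refine ⟨n * (5 * R) + p, by omega, by rw [add_mul]; omega, ?_⟩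
  unfold missN
  have h1 : (n * (5 * R) + p) % (5 * R) = p := by
    rw [mul_comm, Nat.mul_add_mod, Nat.mod_eq_of_lt hp]
  have h2 : (n * (5 * R) + p) / (5 * R) = n := by
    rw [mul_comm, Nat.mul_add_div (by omega), Nat.div_eq_of_lt hp, add_zero]
  rw [h1, h2, add_comm, h]; omega

lemma miss_window (R : ℕ) (g : ℕ → ℕ) (b c : ℕ) (hc : c < R)
    (h1 : (b % (5 * R) + g (b / (5 * R))) % (5 * R) = 5 * c)
    (h2 : g (b / (5 * R) + 1) = 5 * c) (t : ℕ) (ht : t < 5) :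
    missN (5 * R) g (b + t) = c := by
  have hM : 0 < 5 * R := by omega
  unfold missN
  generalize hMM : 5 * R = M at *
  have e := Nat.div_add_mod b M
  have hl := Nat.mod_lt b hM
  generalize b / M = q at *
  generalize b % M = p at *
  by_cases hp : p + t < M
  · have e1 : (b + t) / M = q := by
      rw [← e, add_assoc, Nat.mul_add_div hM, Nat.div_eq_of_lt hp, add_zero]
    have e2 : (b + t) % M = p + t := by
      rw [← e, add_assoc, Nat.mul_add_mod, Nat.mod_eq_of_lt hp]
    rw [e1, e2, show p + t + g q = (p + g q) + t by ring, Nat.add_mod, h1,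
      Nat.mod_eq_of_lt (show t < M by omega), Nat.mod_eq_of_lt (by omega)]
    omega
  · obtain ⟨u, hu⟩ : ∃ u, p + t = M + u := ⟨p + t - M, by omega⟩
    have eb : b + t = M * (q + 1) + u := by rw [mul_add]; omega
    have e1 : (b + t) / M = q + 1 := by
      rw [eb, Nat.mul_add_div hM, Nat.div_eq_of_lt (by omega), add_zero]
    have e2 : (b + t) % M = u := by
      rw [eb, Nat.mul_add_mod, Nat.mod_eq_of_lt (by omega)]
    rw [e1, e2, h2, Nat.mod_eq_of_lt (by omega)]
    omega

lemma analytic (R s : ℕ) (hs : 0 < s) (ρ : ℝ) (h0 : 0 ≤ ρ) (h1 : ρ < 1) :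
    ∃ k0 : ℕ, ∀ k ≥ k0, (R : ℝ) * ((k:ℝ) ^ 3 * (k:ℝ) ^ 3) * ρ ^ (k / s) < 1 := by
  have ht := tendsto_pow_const_mul_const_pow_of_abs_lt_one 6 (show |ρ| < 1 by rwa [abs_of_nonneg h0])
  have ht2 := ht.const_mul ((R : ℝ) * (2 * s) ^ 6)
  rw [mul_zero] at ht2
  have hev := ht2.eventually (gt_mem_nhds (show (0:ℝ) < 1 by norm_num))
  obtain ⟨n0, hn0⟩ := Filter.eventually_atTop.1 hev
  refine ⟨s * (n0 + 1), fun k hk => ?_⟩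
  have hn : n0 + 1 ≤ k / s := (Nat.le_div_iff_mul_le hs).2 (by rw [mul_comm]; exact hk)
  refine lt_of_le_of_lt ?_ (hn0 (k / s) (by omega))
  have hk2 : k ≤ 2 * s * (k / s) := by
    have e := Nat.div_add_mod k s
    have := Nat.mod_lt k hs
    have : s * 1 ≤ s * (k / s) := Nat.mul_le_mul_left _ (by omega)
    rw [mul_assoc]; omega
  have hk3 : (k : ℝ) ≤ 2 * s * ((k / s : ℕ) : ℝ) := by exact_mod_cast hk2
  have h6 : (k:ℝ) ^ 6 ≤ (2 * s * ((k / s : ℕ) : ℝ)) ^ 6 := pow_le_pow_left₀ (by positivity) hk3 6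
  calc (R : ℝ) * ((k:ℝ) ^ 3 * (k:ℝ) ^ 3) * ρ ^ (k / s) = R * (k:ℝ)^6 * ρ ^ (k / s) := by ring
    _ ≤ R * ((2 * s * ((k / s : ℕ) : ℝ)) ^ 6) * ρ ^ (k / s) := by gcongr
    _ = _ := by ring

lemma random_aux (R : ℕ) (hR : 0 < R) : ∃ k0 : ℕ, ∀ k ≥ k0, ∃ miss : ℕ → Fin R,
    (∀ n c, ∃ b, n * (5 * R) ≤ b ∧ b < (n + 1) * (5 * R) ∧ miss b = c) ∧
    (∀ n < k ^ 3, ∀ m < k ^ 3, k ≤ 3 * m → ∀ c, ∃ i < k, ∀ t < 5, miss (n + i * m / k + t) = c) := by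
  classical
  obtain ⟨M, hM⟩ : ∃ M, M = 5 * R := ⟨_, rfl⟩
  have hMpos : 0 < M := by omega
  have hM1 : (5:ℝ) ≤ M := by exact_mod_cast (show 5 ≤ M by omega)
  set s := 6 * M + 3 with hs
  obtain ⟨k0, hk0⟩ := analytic R s (by omega) (((M:ℝ)^2 - 1) / (M:ℝ)^2)
    (div_nonneg (by nlinarith) (by positivity)) (by rw [div_lt_one (by positivity)]; linarith)
  refine ⟨k0 + 1, fun k hk => ?_⟩
  have hkpos : 0 < k := by omega
  have hk0' := hk0 k (by omega)
  set S := 2 * k ^ 3 + 2 with hS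
  have : NeZero M := ⟨by omega⟩
  let ext : (Fin S → Fin M) → ℕ → ℕ := fun ω q => (ω (Fin.ofNat S q) : ℕ)
  let Bad : (ℕ × ℕ) × Fin R → Finset (Fin S → Fin M) := fun e =>
    Finset.univ.filter (fun ω => k ≤ 3 * e.1.2 ∧ ¬ ∃ i < k, ∀ t < 5, missN M (ext ω) (e.1.1 + i * e.1.2 / k + t) = e.2)
  let I : Finset ((ℕ × ℕ) × Fin R) := (Finset.range (k^3) ×ˢ Finset.range (k^3)) ×ˢ Finset.univ
  have hbad : ∀ e ∈ I, ((Bad e).card : ℝ) ≤ (Fintype.card (Fin S → Fin M) : ℝ) * (((M:ℝ)^2 - 1) / (M:ℝ)^2) ^ (k / s) := by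
    rintro ⟨⟨n, m⟩, c⟩ he
    simp only [I, Finset.mem_product, Finset.mem_range, Finset.mem_univ, and_true] at he
    obtain ⟨hn, hm⟩ := he
    by_cases hkm : k ≤ 3 * m
    swap
    · have : Bad ((n,m),c) = ∅ := by simp [Bad, hkm]
      rw [this]
      simp only [Finset.card_empty, Nat.cast_zero]
      exact mul_nonneg (by positivity) (pow_nonneg (div_nonneg (by nlinarith) (by positivity)) _)
    set J := k / s
    have hJs : ∀ j < J, s * j < k := by
      intro j hj
      have h1 : s * J ≤ k := Nat.mul_div_le k s
      have h2 : s * (j + 1) ≤ s * J := Nat.mul_le_mul_left _ hj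
      rw [mul_add] at h2; omega
    let b : ℕ → ℕ := fun j => n + (s * j) * m / k
    have hbstep : ∀ i j, i < j → b i / M + 2 ≤ b j / M := by
      intro i j hij
      have h1 : (s * i) * m / k + 2 * M ≤ (s * j) * m / k := by
        rw [Nat.le_div_iff_mul_le hkpos, add_mul]
        have e1 : (s * i) * m / k * k ≤ s * i * m := Nat.div_mul_le_self _ _
        have e2 : s * (i + 1) * m ≤ s * j * m := by gcongr; omega
        have e3 : 2 * M * k ≤ s * m := by
          calc 2 * M * k ≤ 2 * M * (3 * m) := by gcongr
            _ ≤ s * m := by rw [hs]; nlinarith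
        have e4 : s * (i + 1) * m = s * i * m + s * m := by ring
        omega
      have : b i + 2 * M ≤ b j := by simp only [b]; omega
      calc b i / M + 2 = (b i + 2 * M) / M := by rw [Nat.add_mul_div_right _ _ hMpos]
        _ ≤ _ := Nat.div_le_div_right this
    have hbS : ∀ j < J, b j / M + 1 < S := by
      intro j hj
      have h1 : (s * j) * m / k ≤ m := by
        apply Nat.div_le_of_le_mul
        exact Nat.mul_le_mul_right _ (hJs j hj).le
      have h2 : b j / M ≤ b j := Nat.div_le_self _ _
      have h3 : b j ≤ n + m := by simp only [b]; omega
      omega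
    choose pg hpg1 hpg2 using fun j => exists_shift M (b j % M) (5 * c) (by have := c.2; omega)
    have hval : ∀ q < S, ((Fin.ofNat S q : Fin S) : ℕ) = q := fun q hq => by
      simp [Fin.ofNat, Nat.mod_eq_of_lt hq]
    have hcount := count_aux (ι := Fin S) (W := Fin M) (fun j => Fin.ofNat S (b j / M)) (fun j => Fin.ofNat S (b j / M + 1))
      (fun j => ⟨pg j, hpg1 j⟩) (fun j => ⟨5 * c, by have := c.2; omega⟩) J
      (by
        intro j hj h
        have h := congrArg Fin.val h
        have := hbS j hj
        rw [hval _ (by omega), hval _ (by omega)] at h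
        omega)
      (by
        intro j hj i hi
        have h1 := hbS j hj
        have h2 := hbS i (by omega)
        have h3 := hbstep i j hi
        refine ⟨?_, ?_, ?_, ?_⟩ <;>
        · intro h
          have h := congrArg Fin.val h
          rw [hval _ (by omega), hval _ (by omega)] at h
          omega)
    rw [Fintype.card_fin] at hcount
    rw [div_pow, ← mul_div_assoc, le_div_iff₀ (by positivity)]
    refine le_trans ?_ hcount
    apply mul_le_mul_of_nonneg_right _ (by positivity)
    norm_cast
    apply Finset.card_le_card
    intro ω hω
    simp only [Bad, Finset.mem_filter, Finset.mem_univ, true_and] at hω ⊢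
    intro j hj ⟨h1, h2⟩
    apply hω.2
    refine ⟨s * j, hJs j hj, fun t ht => ?_⟩
    subst hM
    apply miss_window R (ext ω) (b j) c c.2 _ _ t ht
    · simp only [ext]; rw [h1]; exact hpg2 j
    · simp only [ext]; rw [h2]
  have hex : ∃ ω : Fin S → Fin M, ∀ e ∈ I, ω ∉ Bad e := by
    by_contra hcon
    push Not at hcon
    have hsub : (Finset.univ : Finset (Fin S → Fin M)) ⊆ I.biUnion Bad := by
      intro ω _
      obtain ⟨e, he, h⟩ := hcon ω
      exact Finset.mem_biUnion.2 ⟨e, he, h⟩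
    have h1 : (Fintype.card (Fin S → Fin M) : ℝ) ≤ ∑ e ∈ I, ((Bad e).card : ℝ) := by
      have := (Finset.card_le_card hsub).trans Finset.card_biUnion_le
      rw [Finset.card_univ] at this
      exact_mod_cast this
    have h2 := h1.trans (Finset.sum_le_sum hbad)
    rw [Finset.sum_const, nsmul_eq_mul] at h2
    have hI : (I.card : ℝ) = R * ((k:ℝ)^3 * (k:ℝ)^3) := by
      simp [I, Finset.card_product]; ring
    rw [hI] at h2
    have hpos : (0:ℝ) < Fintype.card (Fin S → Fin M) := by
      exact_mod_cast Fintype.card_pos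
    nlinarith
  obtain ⟨ω, hω⟩ := hex
  subst hM
  have hlt : ∀ b, missN (5 * R) (ext ω) b < R := by
    intro b
    unfold missN
    have := Nat.mod_lt (b % (5 * R) + ext ω (b / (5 * R))) hMpos
    omega
  refine ⟨fun b => ⟨missN (5 * R) (ext ω) b, hlt b⟩, ?_, ?_⟩
  · intro n c
    obtain ⟨b, h1, h2, h3⟩ := miss_cover R (ext ω) n c c.2
    exact ⟨b, h1, h2, Fin.ext h3⟩
  · intro n hn m hm hkm c
    have := hω ((n, m), c) (by simp [I, hn, hm])
    simp only [Bad, Finset.mem_filter, Finset.mem_univ, true_and, not_and, not_not] at this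
    obtain ⟨i, hi, h⟩ := this hkm
    exact ⟨i, hi, fun t ht => Fin.ext (h t ht)⟩

def GoodCol (r : ℕ) (ε : ℝ) (k N : ℕ) (ch : ℤ → Fin r) : Prop :=
  ¬ ∃ x : ℕ → ℤ, (∀ i < k, x i ∈ Finset.Icc (1 : ℤ) (N : ℤ)) ∧
    (∀ i < k, ∀ j < k, ch (x i) = ch (x j)) ∧ IsAPeps ε k x

/-- discrete intermediate value -/
lemma ivt_aux (f : ℕ → ℤ) (k : ℕ) (L T : ℤ) (h0 : f 0 < T) (h1 : T ≤ f k)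
    (hstep : ∀ i < k, f (i + 1) < f i + L) : ∃ i ≤ k, T ≤ f i ∧ f i < T + L := by
  induction k with
  | zero => omega
  | succ k ih =>
    by_cases h : T ≤ f k
    · obtain ⟨i, hi, h⟩ := ih h (fun i hi => hstep i (by omega))
      exact ⟨i, by omega, h⟩
    · have := hstep k (by omega)
      exact ⟨k + 1, le_rfl, h1, by omega⟩

lemma pigeon_aux (g : ℕ → ℤ) (n : ℕ) (h : ∀ j < n, g j ≠ g (j + 1)) (hm : ∀ j < n, g j ≤ g (j + 1)) :
    g 0 + n ≤ g n := by
  induction n with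
  | zero => simp
  | succ n ih =>
    have := ih (fun j hj => h j (by omega)) (fun j hj => hm j (by omega))
    have h1 := h n (by omega)
    have h2 := hm n (by omega)
    push_cast
    omega

set_option maxHeartbeats 2000000 in
lemma step_color (r : ℕ) (ε : ℝ) (hε : 0 < ε) (hε1 : ε ≤ 1 / 10) (k k' L Q : ℕ) (hL : 0 < L)
    (hk : 10 ≤ k) (hkε : 1 / ε ≤ k) (hk' : (2 * (5 * (r + 1)) + 1) * k' + 1 ≤ k)
    (hQ : (Q : ℝ) ≤ k / (4 * ε)) (ch0 : ℤ → Fin r) (hch0 : GoodCol r ε k' L ch0)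
    (miss : ℕ → Fin (r + 1))
    (hm1 : ∀ n c, ∃ b, n * (5 * (r + 1)) ≤ b ∧ b < (n + 1) * (5 * (r + 1)) ∧ miss b = c)
    (hm2 : ∀ n < k ^ 3, ∀ m < k ^ 3, k ≤ 3 * m → ∀ c, ∃ i < k, ∀ t < 5,
      miss (n + i * m / k + t) = c) :
    ∃ ch, GoodCol (r + 1) ε k (L * Q) ch := by
  refine ⟨fun x => (miss (((x - 1) / L).toNat + 2)).succAbove (ch0 ((x - 1) % L + 1)), ?_⟩
  rintro ⟨x, hx, hmono, a, d, hd, hap⟩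
  have hLz : (0:ℤ) < L := by exact_mod_cast hL
  have hLr : (0:ℝ) < L := by exact_mod_cast hL
  have hkr : (10:ℝ) ≤ k := by exact_mod_cast hk
  obtain ⟨c, hc⟩ : ∃ c, ∀ i < k, (miss (((x i - 1) / L).toNat + 2)).succAbove (ch0 ((x i - 1) % L + 1)) = c :=
    ⟨_, fun i hi => hmono i hi 0 (by omega)⟩
  have hne : ∀ i < k, miss (((x i - 1) / L).toNat + 2) ≠ c := by
    intro i hi h
    have := hc i hi
    rw [h] at this
    exact Fin.succAbove_ne _ _ this
  have hx1 : ∀ i < k, 0 ≤ x i - 1 := fun i hi => by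
    have := (Finset.mem_Icc.1 (hx i hi)).1; omega
  have hx2 : ∀ i < k, x i ≤ L * Q := fun i hi => by
    have := (Finset.mem_Icc.1 (hx i hi)).2; exact_mod_cast this
  have hap1 : ∀ i < k, (x i : ℝ) - (a + i * d) < ε * d := fun i hi => (abs_lt.1 (hap i hi)).2
  have hap2 : ∀ i < k, -(ε * d) < (x i : ℝ) - (a + i * d) := fun i hi => (abs_lt.1 (hap i hi)).1
  have hεd : ε * d ≤ d / 10 := by nlinarith
  have hstrict : ∀ i, i + 1 < k → x i < x (i + 1) := by
    intro i hi
    have h1 := hap1 i (by omega)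
    have h2 := hap2 (i + 1) hi
    push_cast at h2
    have : (x i : ℝ) < x (i + 1) := by nlinarith
    exact_mod_cast this
  have hmon : ∀ j < k, ∀ i ≤ j, x i ≤ x j := by
    intro j
    induction j with
    | zero => intro _ i hi; rw [Nat.le_zero.1 hi]
    | succ j ih =>
      intro hj i hi
      rcases Nat.lt_or_ge i (j + 1) with h | h
      · exact (ih (by omega) i (by omega)).trans (hstrict j hj).le
      · rw [show i = j + 1 by omega]
  have hB0 : ∀ i < k, 0 ≤ (x i - 1) / (L:ℤ) := fun i hi => Int.ediv_nonneg (hx1 i hi) hLz.le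
  -- the step is bounded
  have hεdL : ε * d ≤ L / 2 := by
    have h1 := hap1 0 (by omega)
    have h2 := hap2 (k - 1) (by omega)
    have h3 : (x (k - 1) : ℝ) ≤ L * Q := by exact_mod_cast hx2 (k - 1) (by omega)
    have h4 : (1:ℝ) ≤ x 0 := by exact_mod_cast (show 1 ≤ x 0 by have := hx1 0 (by omega); omega)
    have h5 : ((k - 1 : ℕ) : ℝ) = k - 1 := by rw [Nat.cast_sub (by omega)]; simp
    rw [h5] at h2
    simp at h1
    have h6 : (k:ℝ) / 2 * d ≤ L * Q := by nlinarith
    have h7 : (L:ℝ) * Q ≤ L * (k / (4 * ε)) := by gcongr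
    have h8 : (k:ℝ) / 2 * d ≤ L * (k / (4 * ε)) := h6.trans h7
    have h9 : (L:ℝ) * (k / (4 * ε)) * ε = L * k / 4 := by field_simp
    have h10 : (k:ℝ) / 2 * d * ε ≤ L * k / 4 := by rw [← h9]; gcongr
    have : (k:ℝ) * (ε * d) ≤ k * (L / 2) := by nlinarith
    exact le_of_mul_le_mul_left this (by linarith)
  rcases le_or_gt ((L:ℝ) / 2) d with hdL | hdL
  · -- large step
    obtain ⟨a', ha'⟩ : ∃ a', a' = (a - 1) / L := ⟨_, rfl⟩
    obtain ⟨d', hd'⟩ : ∃ d', d' = d / L := ⟨_, rfl⟩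
    have hdd : d' * L = d := by rw [hd']; field_simp
    have haa : a' * L = a - 1 := by rw [ha']; field_simp
    have hd1 : 1 / 2 ≤ d' := by rw [hd', le_div_iff₀ hLr]; linarith
    have hd2 : ε * d' ≤ 1 / 2 := by
      have : ε * d' * L ≤ 1 / 2 * L := by rw [mul_assoc, hdd]; linarith
      exact le_of_mul_le_mul_right this hLr
    have hd3 : d' ≤ k / 2 := by
      have : d' ≤ 1 / 2 * (1 / ε) := by
        rw [mul_one_div, le_div_iff₀ hε]; linarith
      linarith
    have hpos : ∀ i < k, a' + i * d' - 1 / 2 < (((x i - 1 : ℤ) : ℝ)) / L ∧ (((x i - 1 : ℤ) : ℝ)) / L < a' + i * d' + 1 / 2 := by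
      intro i hi
      rw [lt_div_iff₀ hLr, div_lt_iff₀ hLr]
      have h1 := hap1 i hi
      have h2 := hap2 i hi
      have e : (a' + i * d') * L = a - 1 + i * d := by rw [add_mul, haa, mul_assoc, hdd]
      push_cast
      constructor <;> nlinarith
    have ha0 : -1 / 2 < a' := by
      have := (hpos 0 (by omega)).2
      have h2 : (0:ℝ) ≤ ((x 0 - 1 : ℤ) : ℝ) / L := div_nonneg (by exact_mod_cast hx1 0 (by omega)) hLr.le
      simp only [Nat.cast_zero, zero_mul, add_zero] at this
      linarith
    have ha1 : a' < Q + 1 / 2 := by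
      have := (hpos 0 (by omega)).1
      have h2 : ((x 0 - 1 : ℤ) : ℝ) / L ≤ Q := by
        rw [div_le_iff₀ hLr]
        have : (x 0 : ℝ) ≤ L * Q := by exact_mod_cast hx2 0 (by omega)
        push_cast; linarith
      simp only [Nat.cast_zero, zero_mul, add_zero] at this
      linarith
    have hQ2 : (Q:ℝ) ≤ k ^ 2 / 4 := by
      calc (Q:ℝ) ≤ k / (4 * ε) := hQ
        _ = k / 4 * (1 / ε) := by field_simp
        _ ≤ k / 4 * k := by gcongr
        _ = _ := by ring
    obtain ⟨n, hn⟩ : ∃ n, n = ⌊a' + 1⌋₊ := ⟨_, rfl⟩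
    obtain ⟨m, hm⟩ : ∃ m, m = ⌊k * d'⌋₊ := ⟨_, rfl⟩
    have hn1 : (n:ℝ) ≤ a' + 1 := by rw [hn]; exact Nat.floor_le (by linarith)
    have hn2 : a' + 1 < n + 1 := by rw [hn]; exact Nat.lt_floor_add_one _
    have hm1' : (m:ℝ) ≤ k * d' := by rw [hm]; exact Nat.floor_le (by nlinarith)
    have hm2' : k * d' < m + 1 := by rw [hm]; exact Nat.lt_floor_add_one _
    obtain ⟨i, hi, hit⟩ := hm2 n (by
        have : (n:ℝ) < (k:ℝ) ^ 3 := by nlinarith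
        exact_mod_cast this) m (by
        have : (m:ℝ) < (k:ℝ) ^ 3 := by nlinarith
        exact_mod_cast this) (by
        have : (k:ℝ) ≤ 3 * m := by nlinarith
        exact_mod_cast this) c
    have hq1 : i * m / k * k ≤ i * m := Nat.div_mul_le_self _ _
    have hq2 : i * m < (i * m / k + 1) * k := Nat.lt_mul_of_div_lt (Nat.lt_succ_self _) (by omega)
    generalize i * m / k = q at *
    have hq1' : (q:ℝ) * k ≤ i * m := by exact_mod_cast hq1
    have hq2' : (i:ℝ) * m < (q + 1) * k := by exact_mod_cast hq2
    have hir : (i:ℝ) ≤ k := by exact_mod_cast hi.le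
    have hi0 : (0:ℝ) ≤ i := by positivity
    have hk0 : (0:ℝ) < k := by linarith
    have hlow : (q:ℝ) ≤ i * d' := by
      have : (q:ℝ) * k ≤ i * d' * k := by
        have := mul_le_mul_of_nonneg_left hm1' hi0
        linarith
      exact le_of_mul_le_mul_right this hk0
    have hupp : (i:ℝ) * d' < q + 2 := by
      have : (i:ℝ) * d' * k < (q + 2) * k := by
        have := mul_le_mul_of_nonneg_left hm2'.le hi0
        linarith
      exact lt_of_mul_lt_mul_right this hk0.le
    obtain ⟨hp1, hp2⟩ := hpos i hi
    have hb := hB0 i hi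
    have hnei := hne i hi
    obtain ⟨b, hbdef⟩ := Int.eq_ofNat_of_zero_le hb
    rw [hbdef, Int.toNat_natCast] at hnei
    have hb1 : (b:ℤ) * L ≤ x i - 1 := by rw [← hbdef]; exact Int.ediv_mul_le _ hLz.ne'
    have hb2 : x i - 1 < ((b:ℤ) + 1) * L := by rw [← hbdef]; exact Int.lt_ediv_add_one_mul_self _ hLz
    have hb1' : (b:ℝ) ≤ ((x i - 1 : ℤ) : ℝ) / L := by rw [le_div_iff₀ hLr]; exact_mod_cast hb1
    have hb2' : ((x i - 1 : ℤ) : ℝ) / L < b + 1 := by rw [div_lt_iff₀ hLr]; exact_mod_cast hb2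
    have g1 : n + q < b + 2 + 1 := by
      have : (n:ℝ) + q < b + 2 + 1 := by linarith
      exact_mod_cast this
    have g2 : b + 2 < n + q + 5 := by
      have : (b:ℝ) + 2 < n + q + 5 := by linarith
      exact_mod_cast this
    obtain ⟨t, ht⟩ : ∃ t, b + 2 = n + q + t := ⟨b + 2 - (n + q), by omega⟩
    apply hnei
    rw [ht]
    exact hit t (by omega)
  · -- small step
    have hgap : ∀ i < k - 1, x (i + 1) - 1 < x i - 1 + L := by
      intro i hi
      have h1 := hap2 i (by omega)
      have h2 := hap1 (i + 1) (by omega)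
      push_cast at h2
      have : (x (i + 1) : ℝ) < x i + L := by nlinarith
      have : x (i + 1) < x i + L := by exact_mod_cast this
      omega
    obtain ⟨b0, hb0⟩ := Int.eq_ofNat_of_zero_le (hB0 0 (by omega))
    obtain ⟨b1, hb1⟩ := Int.eq_ofNat_of_zero_le (hB0 (k - 1) (by omega))
    obtain ⟨M, hM⟩ : ∃ M, M = 5 * (r + 1) := ⟨_, rfl⟩
    rw [← hM] at hm1 hk'
    rcases Nat.lt_or_ge (b0 + 2 * M) b1 with hlt | hge
    · obtain ⟨b, hbl, hbu, hbc⟩ := hm1 ((b0 + 2) / M + 1) c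
      have e := Nat.div_add_mod (b0 + 2) M
      have e2 := Nat.mod_lt (b0 + 2) (show M > 0 by omega)
      generalize (b0 + 2) / M = q at *
      have e3 : (q + 1) * M = M * q + M := by ring
      have e4 : (q + 1 + 1) * M = M * q + 2 * M := by ring
      obtain ⟨b', rfl⟩ : ∃ b', b = b' + 2 := ⟨b - 2, by omega⟩
      have hb0' : b0 < b' := by omega
      have hb1' : b' < b1 := by omega
      obtain ⟨i, hi, hi1, hi2⟩ := ivt_aux (fun i => x i - 1) (k - 1) L (b' * L)
        (by
          have h1 : x 0 - 1 < ((b0:ℤ) + 1) * L := by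
            have := Int.lt_ediv_add_one_mul_self (x 0 - 1) hLz
            rw [hb0] at this; exact this
          have h2 : ((b0:ℤ) + 1) * L ≤ b' * L := mul_le_mul_of_nonneg_right (by omega) hLz.le
          omega)
        (by
          have h1 : (b1:ℤ) * L ≤ x (k - 1) - 1 := by
            have := Int.ediv_mul_le (x (k - 1) - 1) hLz.ne'
            rw [hb1] at this; exact this
          have h2 : (b':ℤ) * L ≤ b1 * L := mul_le_mul_of_nonneg_right (by omega) hLz.le
          omega) hgap
      apply hne i (by omega)
      have : (x i - 1) / (L:ℤ) = b' := by
        apply le_antisymm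
        · apply Int.le_of_lt_add_one
          apply Int.ediv_lt_of_lt_mul hLz
          rw [add_mul, one_mul]; exact hi2
        · exact (Int.le_ediv_iff_mul_le hLz).2 hi1
      rw [this, Int.toNat_natCast]; exact hbc
    · have hjk : ∀ j ≤ 2 * M + 1, j * k' ≤ k - 1 := by
        intro j hj
        have : j * k' ≤ (2 * M + 1) * k' := Nat.mul_le_mul_right _ hj
        omega
      have hex : ∃ j < 2 * M + 1, (x (j * k') - 1) / (L:ℤ) = (x ((j + 1) * k') - 1) / (L:ℤ) := by
        by_contra hcon
        push Not at hcon
        have hmm : ∀ j < 2 * M + 1, (x (j * k') - 1) / (L:ℤ) ≤ (x ((j + 1) * k') - 1) / (L:ℤ) := by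
          intro j hj
          apply Int.ediv_le_ediv hLz
          have h1 := hjk (j + 1) (by omega)
          have := hmon ((j + 1) * k') (by omega) (j * k') (Nat.mul_le_mul_right _ (by omega))
          omega
        have h1 := pigeon_aux (fun j => (x (j * k') - 1) / (L:ℤ)) (2 * M + 1) hcon hmm
        simp only [zero_mul] at h1
        have h2 : (x ((2 * M + 1) * k') - 1) / (L:ℤ) ≤ (x (k - 1) - 1) / L := by
          apply Int.ediv_le_ediv hLz
          have := hmon (k - 1) (by omega) ((2 * M + 1) * k') (hjk _ le_rfl)
          omega
        rw [hb0] at h1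
        rw [hb1] at h2
        simp at h1 h2
        omega
      obtain ⟨j, hj, hjeq⟩ := hex
      have hj1 := hjk (j + 1) (by omega)
      have hjj : (j + 1) * k' = j * k' + k' := by ring
      have hblk : ∀ i < k', (x (j * k' + i) - 1) / (L:ℤ) = (x (j * k') - 1) / (L:ℤ) := by
        intro i hi
        apply le_antisymm
        · rw [hjeq]
          apply Int.ediv_le_ediv hLz
          have := hmon ((j + 1) * k') (by omega) (j * k' + i) (by omega)
          omega
        · apply Int.ediv_le_ediv hLz
          have := hmon (j * k' + i) (by omega) (j * k') (by omega)
          omega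
      generalize (x (j * k') - 1) / (L:ℤ) = B at *
      apply hch0
      refine ⟨fun i => (x (j * k' + i) - 1) % L + 1, ?_, ?_, ?_⟩
      · intro i hi
        have h1 := Int.emod_nonneg (x (j * k' + i) - 1) hLz.ne'
        have h2 := Int.emod_lt_of_pos (x (j * k' + i) - 1) hLz
        rw [Finset.mem_Icc]; constructor <;> dsimp only <;> omega
      · intro i hi i' hi'
        have h1 := hc (j * k' + i) (by omega)
        have h2 := hc (j * k' + i') (by omega)
        rw [hblk i hi] at h1
        rw [hblk i' hi', ← h1] at h2
        exact (Fin.succAbove_right_injective h2).symm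
      · refine ⟨a + (j * k' : ℕ) * d - L * B, d, hd, fun i hi => ?_⟩
        have h1 := hap (j * k' + i) (by omega)
        have h2 : (x (j * k' + i) - 1) % (L:ℤ) + 1 = x (j * k' + i) - L * B := by
          rw [Int.emod_def, hblk i hi]; ring
        simp only [h2]
        push_cast at h1 ⊢
        convert h1 using 2
        ring

lemma main_aux (r : ℕ) : ∃ ε₀ : ℝ, 0 < ε₀ ∧ ∃ c : ℝ, 0 < c ∧ ∃ C : ℝ, 0 < C ∧
    ∀ ε : ℝ, 0 < ε → ε ≤ ε₀ → ∀ k : ℕ, C / ε ≤ k →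
      ∃ N : ℕ, c * (k:ℝ) ^ (r + 1) / ε ^ r ≤ N ∧ ∃ ch, GoodCol (r + 1) ε k N ch := by
  induction r with
  | zero =>
    refine ⟨1 / 10, by norm_num, 1 / 2, by norm_num, 1, by norm_num, ?_⟩
    intro ε hε hε1 k hk
    have hk10 : (10:ℝ) ≤ k := by
      refine le_trans ?_ hk
      rw [le_div_iff₀ hε]; linarith
    have hkn : 10 ≤ k := by exact_mod_cast hk10
    refine ⟨k - 1, ?_, fun _ => 0, ?_⟩
    · rw [Nat.cast_sub (by omega)]
      simp
      linarith
    · rintro ⟨x, hx, -, a, d, hd, hap⟩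
      have hstrict : ∀ i < k - 1, x i < x (i + 1) := by
        intro i hi
        have h1 := (abs_lt.1 (hap i (by omega))).2
        have h2 := (abs_lt.1 (hap (i + 1) (by omega))).1
        push_cast at h2
        have : (x i : ℝ) < x (i + 1) := by nlinarith
        exact_mod_cast this
      have := pigeon_aux x (k - 1) (fun j hj => (hstrict j hj).ne) (fun j hj => (hstrict j hj).le)
      have h0 := Finset.mem_Icc.1 (hx 0 (by omega))
      have h1 := Finset.mem_Icc.1 (hx (k - 1) (by omega))
      omega
  | succ r ih =>
    obtain ⟨ε₁, hε₁, c, hc, C, hC, ih⟩ := ih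
    obtain ⟨k0, hk0⟩ := random_aux (r + 1 + 1) (by omega)
    obtain ⟨D, hD⟩ : ∃ D, D = 2 * (5 * (r + 1 + 1)) + 1 := ⟨_, rfl⟩
    have hDpos : 0 < D := by omega
    have hDr : (1:ℝ) ≤ D := by exact_mod_cast hDpos
    refine ⟨min ε₁ (1 / 10), by positivity, c / (2 * D) ^ (r + 1) / 8, by positivity,
      2 * D * C + 2 * D + k0 + 10, by positivity, ?_⟩
    intro ε hε hε' k hk
    have hε1 : ε ≤ ε₁ := hε'.trans (min_le_left _ _)
    have hε2 : ε ≤ 1 / 10 := hε'.trans (min_le_right _ _)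
    rw [div_le_iff₀ hε] at hk
    have hk00 : (0:ℝ) ≤ k := by positivity
    have hk000 : (0:ℝ) ≤ k0 := by positivity
    have hDC : 0 < D * C := by positivity
    have hkk : (2 * D * C + 2 * D + k0 + 10 : ℝ) ≤ k := by nlinarith
    have hk10 : 10 ≤ k := by
      have : (10:ℝ) ≤ k := by linarith
      exact_mod_cast this
    have hkk0 : k0 ≤ k := by
      have : (k0:ℝ) ≤ k := by linarith
      exact_mod_cast this
    have hkD : 2 * D ≤ k := by
      have : (2 * D:ℝ) ≤ k := by linarith
      exact_mod_cast this
    have hkε : 1 / ε ≤ k := by rw [div_le_iff₀ hε]; linarith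
    obtain ⟨miss, hm1, hm2⟩ := hk0 k hkk0
    obtain ⟨k', hk'def⟩ : ∃ k', k' = (k - 1) / D := ⟨_, rfl⟩
    have hk'1 : D * k' + 1 ≤ k := by
      have : D * k' ≤ k - 1 := by rw [hk'def]; exact Nat.mul_div_le _ _
      omega
    have hk'2 : (k:ℝ) / (2 * D) ≤ k' := by
      have h1 := Nat.div_add_mod (k - 1) D
      have h2 := Nat.mod_lt (k - 1) hDpos
      rw [← hk'def] at h1
      have : k ≤ 2 * D * k' := by rw [mul_assoc]; omega
      rw [div_le_iff₀ (by positivity)]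
      have : (k:ℝ) ≤ 2 * D * k' := by exact_mod_cast this
      linarith
    have hk'3 : C / ε ≤ k' := by
      refine le_trans ?_ hk'2
      rw [div_le_div_iff₀ hε (by positivity)]
      nlinarith
    obtain ⟨L, hL, ch0, hch0⟩ := ih ε hε hε1 k' hk'3
    have hLlow : c * ((k:ℝ) / (2 * D)) ^ (r + 1) / ε ^ r ≤ L := by
      refine le_trans ?_ hL
      gcongr
    have hkpos : (0:ℝ) < k := by exact_mod_cast (show 0 < k by omega)
    have hLpos : 0 < L := by
      have : (0:ℝ) < L := lt_of_lt_of_le (by positivity) hLlow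
      exact_mod_cast this
    obtain ⟨Q, hQ⟩ : ∃ Q, Q = ⌊(k:ℝ) / (4 * ε)⌋₊ := ⟨_, rfl⟩
    have hQ1 : (Q:ℝ) ≤ k / (4 * ε) := by rw [hQ]; exact Nat.floor_le (by positivity)
    have hQ2 : (k:ℝ) / (8 * ε) ≤ Q := by
      have h1 : (k:ℝ) / (4 * ε) < Q + 1 := by rw [hQ]; exact Nat.lt_floor_add_one _
      have h2 : (k:ℝ) / (4 * ε) = 2 * (k / (8 * ε)) := by ring
      have h3 : 1 ≤ (k:ℝ) / (8 * ε) := by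
        rw [le_div_iff₀ (by positivity)]
        have : (10:ℝ) ≤ k := by exact_mod_cast hk10
        linarith
      linarith
    obtain ⟨ch, hch⟩ := step_color (r + 1) ε hε hε2 k k' L Q hLpos hk10 hkε (hD ▸ hk'1) hQ1 ch0 hch0
      miss hm1 hm2
    refine ⟨L * Q, ?_, ch, hch⟩
    push_cast
    calc c / (2 * D) ^ (r + 1) / 8 * (k:ℝ) ^ (r + 1 + 1) / ε ^ (r + 1)
        = (c * ((k:ℝ) / (2 * D)) ^ (r + 1) / ε ^ r) * (k / (8 * ε)) := by
          rw [div_pow]; field_simp; ring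
      _ ≤ L * Q := by gcongr

theorem approximate_van_der_waerden_lower (r : ℕ) (hr : 1 ≤ r) :
    ∃ ε₀ : ℝ, 0 < ε₀ ∧ ∃ c : ℝ, 0 < c ∧
      ∀ ε : ℝ, 0 < ε → ε ≤ ε₀ →
        ∀ k : ℕ,
          (k : ℝ) ≥ 2 ^ r * (Nat.factorial r : ℝ) * ε⁻¹ * (Real.log (1 / (5 * ε))) ^ r →
          ∃ N : ℕ,
            (N : ℝ) ≥ c * (k : ℝ) ^ r /
              (ε ^ (r - 1) * (Real.log (1 / ε)) ^ (Nat.choose (r + 1) 2 - 1)) ∧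
            ∃ ch : ℤ → Fin r,
              ¬ ∃ x : ℕ → ℤ,
                (∀ i < k, x i ∈ Finset.Icc (1 : ℤ) (N : ℤ)) ∧
                (∀ i < k, ∀ j < k, ch (x i) = ch (x j)) ∧
                IsAPeps ε k x := by
  obtain ⟨s, rfl⟩ : ∃ s, r = s + 1 := ⟨r - 1, by omega⟩
  obtain ⟨ε₁, hε₁, c, hc, C, hC, h⟩ := main_aux s
  obtain ⟨T, hT⟩ : ∃ T, T = max 1 C := ⟨_, rfl⟩
  have hT1 : 1 ≤ T := hT ▸ le_max_left _ _
  have hTC : C ≤ T := hT ▸ le_max_right _ _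
  refine ⟨min ε₁ (Real.exp (-T) / 5), by positivity, c, hc, ?_⟩
  intro ε hε hε' k hk
  have hε1 : ε ≤ ε₁ := hε'.trans (min_le_left _ _)
  have hε2 : ε ≤ Real.exp (-T) / 5 := hε'.trans (min_le_right _ _)
  have hlog : T ≤ Real.log (1 / (5 * ε)) := by
    rw [Real.le_log_iff_exp_le (by positivity), le_div_iff₀ (by positivity)]
    have : Real.exp T * Real.exp (-T) = 1 := by rw [← Real.exp_add]; simp
    have hp := Real.exp_pos T
    nlinarith
  have hlog2 : 1 ≤ Real.log (1 / ε) := by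
    refine hT1.trans (hlog.trans ?_)
    apply Real.log_le_log (by positivity)
    apply one_div_le_one_div_of_le hε
    linarith
  have hkC : C / ε ≤ k := by
    refine le_trans ?_ hk
    have h1 : C ≤ Real.log (1 / (5 * ε)) ^ (s + 1) := by
      calc C ≤ Real.log (1 / (5 * ε)) := hTC.trans hlog
        _ ≤ _ := le_self_pow₀ (hT1.trans hlog) (by omega)
    have h2 : (1:ℝ) ≤ 2 ^ (s + 1) * ((s + 1).factorial : ℝ) := by
      have a1 : (1:ℝ) ≤ 2 ^ (s + 1) := one_le_pow₀ (by norm_num)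
      have a2 : (1:ℝ) ≤ ((s + 1).factorial : ℝ) := by exact_mod_cast Nat.factorial_pos _
      nlinarith
    calc C / ε = 1 * ε⁻¹ * C := by rw [div_eq_mul_inv]; ring
      _ ≤ _ := by gcongr
  obtain ⟨N, hN, ch, hch⟩ := h ε hε hε1 k hkC
  refine ⟨N, ?_, ch, hch⟩
  refine le_trans ?_ hN
  have h1 : (1:ℝ) ≤ Real.log (1 / ε) ^ ((s + 1 + 1).choose 2 - 1) := one_le_pow₀ hlog2
  rw [Nat.add_sub_cancel]
  apply div_le_div_of_nonneg_left (by positivity) (by positivity)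
  exact le_mul_of_one_le_right (by positivity) h1
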